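/- Let U_p, U_f, Y_p, Y_f be the block partition of a matrix H whose column space equals the subspace B of length-L trajectories of an LTI system, with L = T_ini + T_f. If the map sending a column index to its (past input, future input, past output) block is injective on the behavior (i.e., the stacked matrix [U_p; U_f; Y_p] has the same rank as H), then the subspace predictor Y_f [U_p; U_f; Y_p]^† z reproduces the true future output: for any trajectory (u_p, u_f, y_p, y_f) of the system, Y_f [U_p; U_f; Y_p]^† (u_p, u_f, y_p) = y_f. -/

import Mathlib

open Matrix

/-- `G⁺` is the Moore–Penrose pseudoinverse of `G`, characterized by the four Penrose
conditions. -/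
def IsMoorePenrose {α β : Type*} [Fintype α] [Fintype β]
    (G : Matrix α β ℝ) (Gd : Matrix β α ℝ) : Prop :=
  G * Gd * G = G ∧ Gd * G * Gd = Gd ∧ (G * Gd)ᵀ = G * Gd ∧ (Gd * G)ᵀ = Gd * G

/-!
Appending the rows `Yf` to `G` can only shrink the kernel, so if it does not raise the rank it
leaves the kernel unchanged, that is, `ker G ≤ ker Yf`. Since `G * Gd * G = G`, the coefficient
vectors `Gd *ᵥ (G *ᵥ g)` and `g` differ by an element of `ker G`; hence `Yf` agrees on them.
-/

section

variable {m p n R K : Type*} [Fintype n]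

theorem ker_mulVecLin_fromRows [CommSemiring R] (A : Matrix m n R) (B : Matrix p n R) :
    (fromRows A B).mulVecLin.ker = A.mulVecLin.ker ⊓ B.mulVecLin.ker := by
  ext v
  simp only [Submodule.mem_inf, LinearMap.mem_ker, mulVecLin_apply, fromRows_mulVec,
    ← Sum.elim_zero_zero, Sum.elim_eq_iff]

theorem rank_add_finrank_ker_mulVecLin [Field K] (A : Matrix m n K) :
    A.rank + Module.finrank K A.mulVecLin.ker = Fintype.card n := by
  rw [Matrix.rank, LinearMap.finrank_range_add_finrank_ker, Module.finrank_fintype_fun_eq_card]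

theorem ker_mulVecLin_le_of_rank_eq_rank_fromRows [Field K] {A : Matrix m n K}
    {B : Matrix p n K} (hrank : A.rank = (fromRows A B).rank) :
    A.mulVecLin.ker ≤ B.mulVecLin.ker := by
  have hle : A.mulVecLin.ker ⊓ B.mulVecLin.ker ≤ A.mulVecLin.ker := inf_le_left
  have hfinrank : Module.finrank K ↥(A.mulVecLin.ker ⊓ B.mulVecLin.ker) =
      Module.finrank K A.mulVecLin.ker := by
    rw [← ker_mulVecLin_fromRows]
    have hA := rank_add_finrank_ker_mulVecLin A
    have hAB := rank_add_finrank_ker_mulVecLin (fromRows A B)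
    lia
  exact inf_eq_left.mp (Submodule.eq_of_le_of_finrank_eq hle hfinrank)

theorem mulVec_mulVec_mulVec_eq_of_ker_le [CommRing R] [Fintype m] {A : Matrix m n R}
    {A' : Matrix n m R} {B : Matrix p n R} (hA : A * A' * A = A)
    (hker : A.mulVecLin.ker ≤ B.mulVecLin.ker) (v : n → R) :
    B *ᵥ (A' *ᵥ (A *ᵥ v)) = B *ᵥ v := by
  have hAv : A *ᵥ (A' *ᵥ (A *ᵥ v)) = A *ᵥ v := by
    rw [mulVec_mulVec, mulVec_mulVec, hA]
  exact LinearMap.sub_mem_ker_iff.mp (hker (LinearMap.sub_mem_ker_iff.mpr hAv))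

theorem subspace_predictor_exact_general [Field K] [Fintype m] {G : Matrix m n K}
    {Yf : Matrix p n K} {Gd : Matrix n m K} (hrank : G.rank = (fromRows G Yf).rank)
    (hGd : G * Gd * G = G) {z : m → K} {yf : p → K}
    (htraj : Sum.elim z yf ∈ (fromRows G Yf).mulVecLin.range) :
    Yf *ᵥ (Gd *ᵥ z) = yf := by
  obtain ⟨g, hg⟩ := htraj
  obtain ⟨rfl, rfl⟩ : G *ᵥ g = z ∧ Yf *ᵥ g = yf := by
    rwa [mulVecLin_apply, fromRows_mulVec, Sum.elim_eq_iff] at hg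
  exact mulVec_mulVec_mulVec_eq_of_ker_le hGd (ker_mulVecLin_le_of_rank_eq_rank_fromRows hrank) g

end

/-- let `H = [U_p; U_f; Y_p; Y_f]` be a block matrix whose column space is
the trajectory subspace `B`, and suppose `rank [U_p; U_f; Y_p] = rank H` (so future
outputs are determined by past data and future inputs along `B`).  Then the subspace
predictor reproduces the true future output: for every trajectory
`(u_p, u_f, y_p, y_f)` in the column space of `H`,
`Y_f [U_p; U_f; Y_p]⁺ (u_p, u_f, y_p) = y_f`. -/
theorem subspace_predictor_exact (a b c e N : ℕ)
    (Up : Matrix (Fin a) (Fin N) ℝ) (Uf : Matrix (Fin b) (Fin N) ℝ)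
    (Yp : Matrix (Fin c) (Fin N) ℝ) (Yf : Matrix (Fin e) (Fin N) ℝ)
    (G : Matrix (Fin a ⊕ Fin b ⊕ Fin c) (Fin N) ℝ)
    (hG : G = Matrix.of fun i j =>
      Sum.elim (fun i => Up i j) (Sum.elim (fun i => Uf i j) (fun i => Yp i j)) i)
    (H : Matrix ((Fin a ⊕ Fin b ⊕ Fin c) ⊕ Fin e) (Fin N) ℝ)
    (hH : H = Matrix.of fun i j => Sum.elim (fun i => G i j) (fun i => Yf i j) i)
    (hrank : G.rank = H.rank)
    (Gd : Matrix (Fin N) (Fin a ⊕ Fin b ⊕ Fin c) ℝ)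
    (hGd : IsMoorePenrose G Gd)
    (up : Fin a → ℝ) (uf : Fin b → ℝ) (yp : Fin c → ℝ) (yf : Fin e → ℝ)
    (htraj : ∃ g : Fin N → ℝ,
      Up.mulVec g = up ∧ Uf.mulVec g = uf ∧ Yp.mulVec g = yp ∧ Yf.mulVec g = yf) :
    Yf.mulVec (Gd.mulVec (Sum.elim up (Sum.elim uf yp))) = yf := by
  obtain rfl : G = fromRows Up (fromRows Uf Yp) := by rw [hG]; ext (i | i | i) j <;> rfl
  obtain rfl : H = fromRows (fromRows Up (fromRows Uf Yp)) Yf := by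
    rw [hH]; ext (i | i) j <;> rfl
  obtain ⟨g, rfl, rfl, rfl, rfl⟩ := htraj
  exact subspace_predictor_exact_general hrank hGd.1
    ⟨g, by simp only [mulVecLin_apply, fromRows_mulVec]⟩
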